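/- Suppose ℓ_n > 0, σ_{n,0} > 0, σ_{n,1} ≥ 0, σ_{n,-1} ≥ 0, κ_n ∈ ℝ for all n ≥ 1, and the coefficients satisfy limsup_{n→∞} σ_{n,1} < ∞, liminf_{n→∞} σ_{n,0} > 0, limsup_{n→∞} σ_{n,-1} < ∞, 0 < liminf_{n→∞} √(ℓ_{n+1}/ℓ_n) ≤ limsup_{n→∞} √(ℓ_{n+1}/ℓ_n) < ∞, and limsup_{n→∞} |κ_n|/√ℓ_n < ∞. If a real sequence (x_n)_{n≥0} satisfies ℓ_n = x_n (σ_{n,1} x_{n+1} + σ_{n,0} x_n + σ_{n,-1} x_{n-1}) + κ_n x_n for all n ≥ 1, then liminf_{n→∞} x_n/√ℓ_n > −∞ if and only if limsup_{n→∞} x_n/√ℓ_n < ∞. -/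

import Mathlib

/-!
Put `yₙ = xₙ / √ℓₙ`.  If `yₙ ≥ -M` eventually, then at an index with `yₙ > 1` the neighbours
satisfy `xₙ₊₁, xₙ₋₁ ≥ -const · √ℓₙ`, because consecutive values of `√ℓ` are comparable.  Dividing
the recurrence by `xₙ` then gives `√ℓₙ > ℓₙ / xₙ ≥ s xₙ - const · √ℓₙ`, where `s > 0` is an eventual
lower bound of `σₙ₀`, so `yₙ` is bounded above (`eventually_le_of_eventually_ge`).  The converse is
the same statement for `-x` and `-κ`, which solve the same recurrence.
-/

open Filter

lemma limsup_coe_lt_top_iff (u : ℕ → ℝ) :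
    limsup (fun n => (u n : EReal)) atTop < ⊤ ↔ ∃ C : ℝ, 0 ≤ C ∧ ∀ᶠ n in atTop, u n ≤ C := by
  constructor
  · intro h
    obtain ⟨C, hC, -⟩ := EReal.lt_iff_exists_real_btwn.1 h
    refine ⟨max C 0, le_max_right _ _, ?_⟩
    filter_upwards [eventually_lt_of_limsup_lt hC] with n hn
    exact (EReal.coe_lt_coe_iff.1 hn).le.trans (le_max_left _ _)
  · rintro ⟨C, -, hC⟩
    refine lt_of_le_of_lt (limsup_le_of_le (a := (C : EReal)) (by isBoundedDefault) ?_)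
      (EReal.coe_lt_top C)
    filter_upwards [hC] with n hn
    exact EReal.coe_le_coe_iff.2 hn

lemma bot_lt_liminf_coe_iff (u : ℕ → ℝ) :
    ⊥ < liminf (fun n => (u n : EReal)) atTop ↔ ∃ C : ℝ, 0 ≤ C ∧ ∀ᶠ n in atTop, -C ≤ u n := by
  constructor
  · intro h
    obtain ⟨C, -, hC⟩ := EReal.lt_iff_exists_real_btwn.1 h
    refine ⟨max (-C) 0, le_max_right _ _, ?_⟩
    filter_upwards [eventually_lt_of_lt_liminf hC] with n hn
    have h1 := EReal.coe_lt_coe_iff.1 hn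
    have h2 := le_max_left (-C) 0
    linarith
  · rintro ⟨C, -, hC⟩
    refine lt_of_lt_of_le (EReal.bot_lt_coe (-C))
      (le_liminf_of_le (a := ((-C : ℝ) : EReal)) (by isBoundedDefault) ?_)
    filter_upwards [hC] with n hn
    exact EReal.coe_le_coe_iff.2 hn

lemma exists_pos_of_zero_lt_liminf_coe (u : ℕ → ℝ)
    (h : 0 < liminf (fun n => (u n : EReal)) atTop) :
    ∃ c : ℝ, 0 < c ∧ ∀ᶠ n in atTop, c ≤ u n := by
  obtain ⟨c, hc0, hc⟩ := EReal.lt_iff_exists_real_btwn.1 h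
  refine ⟨c, by exact_mod_cast hc0, ?_⟩
  filter_upwards [eventually_lt_of_lt_liminf hc] with n hn
  exact (EReal.coe_lt_coe_iff.1 hn).le

/-- The a priori bound at a single index: `r` stands for `√ℓₙ`, `y` for `xₙ`, and `u`, `v` for the
neighbours `xₙ₊₁`, `xₙ₋₁`, which are at least `-P r` and `-Q r`. -/
lemma le_mul_of_recurrence {r y u v a s₀ b k A s B K P Q : ℝ} (hr : 0 < r)
    (ha : 0 ≤ a) (haA : a ≤ A) (hb : 0 ≤ b) (hbB : b ≤ B) (hs₀ : s ≤ s₀)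
    (hk : |k| ≤ K * r) (hP : 0 ≤ P) (hQ : 0 ≤ Q) (hu : -(P * r) ≤ u) (hv : -(Q * r) ≤ v)
    (heq : r ^ 2 = y * (a * u + s₀ * y + b * v) + k * y) (hy : r < y) :
    s * y ≤ (1 + A * P + B * Q + K) * r := by
  have hy0 : 0 < y := hr.trans hy
  have h1 : -(A * P * r) ≤ a * u := by
    nlinarith [mul_le_mul_of_nonneg_left hu ha,
      mul_le_mul_of_nonneg_right haA (mul_nonneg hP hr.le)]
  have h2 : -(B * Q * r) ≤ b * v := by
    nlinarith [mul_le_mul_of_nonneg_left hv hb,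
      mul_le_mul_of_nonneg_right hbB (mul_nonneg hQ hr.le)]
  have h3 : s * y ≤ s₀ * y := mul_le_mul_of_nonneg_right hs₀ hy0.le
  have h4 : -(K * r) ≤ k := (abs_le.1 hk).1
  have h5 : a * u + s₀ * y + b * v + k < r := by
    by_contra! h
    nlinarith [mul_le_mul_of_nonneg_left h hy0.le, mul_lt_mul_of_pos_right hy hr]
  linarith

/-- A solution whose normalisation `xₙ / √ℓₙ` is eventually bounded below is eventually bounded
above. -/
lemma eventually_le_of_eventually_ge (ℓ σ1 σ0 σm1 κ x : ℕ → ℝ)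
    (hℓ : ∀ n : ℕ, 1 ≤ n → 0 < ℓ n)
    (hσ1 : ∀ n : ℕ, 1 ≤ n → 0 ≤ σ1 n)
    (hσm1 : ∀ n : ℕ, 1 ≤ n → 0 ≤ σm1 n)
    {A s B c R K M : ℝ} (hs : 0 < s) (hc : 0 < c) (hR : 0 ≤ R) (hK : 0 ≤ K) (hM : 0 ≤ M)
    (hA0 : 0 ≤ A) (hB0 : 0 ≤ B)
    (hA : ∀ᶠ n in atTop, σ1 n ≤ A) (hS : ∀ᶠ n in atTop, s ≤ σ0 n)
    (hB : ∀ᶠ n in atTop, σm1 n ≤ B)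
    (hcℓ : ∀ᶠ n in atTop, c ≤ √(ℓ (n + 1) / ℓ n))
    (hRℓ : ∀ᶠ n in atTop, √(ℓ (n + 1) / ℓ n) ≤ R)
    (hκ : ∀ᶠ n in atTop, |κ n| / √(ℓ n) ≤ K)
    (heq : ∀ n : ℕ, 1 ≤ n →
      ℓ n = x n * (σ1 n * x (n + 1) + σ0 n * x n + σm1 n * x (n - 1)) + κ n * x n)
    (hx : ∀ᶠ n in atTop, -M ≤ x n / √(ℓ n)) :
    ∃ C : ℝ, 0 ≤ C ∧ ∀ᶠ n in atTop, x n / √(ℓ n) ≤ C := by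
  set D := (1 + A * (M * R) + B * (M / c) + K) / s with hD
  have hD0 : 0 ≤ D := by positivity
  refine ⟨max 1 D, by positivity, ?_⟩
  have hpred : Tendsto (fun n : ℕ => n - 1) atTop atTop := tendsto_sub_atTop_nat 1
  have hsucc : Tendsto (fun n : ℕ => n + 1) atTop atTop := tendsto_add_atTop_nat 1
  filter_upwards [hA, hS, hB, hRℓ, hκ, hpred.eventually hcℓ, hpred.eventually hx,
    hsucc.eventually hx, eventually_ge_atTop 2] with n hA hS hB hR' hκ hc' hxp hxs hn
  have hr : 0 < √(ℓ n) := Real.sqrt_pos.2 (hℓ n (by omega))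
  have hrs : 0 < √(ℓ (n + 1)) := Real.sqrt_pos.2 (hℓ _ (by omega))
  have hrp : 0 < √(ℓ (n - 1)) := Real.sqrt_pos.2 (hℓ _ (by omega))
  rw [Nat.sub_add_cancel (by omega : 1 ≤ n), Real.sqrt_div (hℓ n (by omega)).le,
    le_div_iff₀ hrp] at hc'
  rw [Real.sqrt_div (hℓ (n + 1) (by omega)).le, div_le_iff₀ hr] at hR'
  rw [div_le_iff₀ hr] at hκ
  rw [le_div_iff₀ hrp] at hxp
  rw [le_div_iff₀ hrs] at hxs
  have hu : -(M * R * √(ℓ n)) ≤ x (n + 1) := by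
    nlinarith [mul_le_mul_of_nonneg_left hR' hM]
  have hv : -(M / c * √(ℓ n)) ≤ x (n - 1) := by
    have h : √(ℓ (n - 1)) ≤ √(ℓ n) / c := by rw [le_div_iff₀ hc]; linarith
    have h' := mul_le_mul_of_nonneg_left h hM
    have h'' : M / c * √(ℓ n) = M * (√(ℓ n) / c) := by ring
    linarith
  rw [div_le_iff₀ hr]
  rcases le_or_gt (x n) (√(ℓ n)) with h | h
  · nlinarith [le_max_left 1 D]
  · have key := le_mul_of_recurrence hr (hσ1 n (by omega)) hA (hσm1 n (by omega)) hB hS hκ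
      (by positivity) (by positivity) hu hv
      (by rw [Real.sq_sqrt (hℓ n (by omega)).le]; exact heq n (by omega)) h
    have h1 : x n ≤ D * √(ℓ n) := by
      rw [hD, div_mul_eq_mul_div, le_div_iff₀ hs]
      linarith
    exact h1.trans (mul_le_mul_of_nonneg_right (le_max_right _ _) hr.le)

/-- Corollary of the boundedness theorem: under the stated coefficient conditions, any
solution of `ℓₙ = xₙ (σₙ₁ xₙ₊₁ + σₙ₀ xₙ + σₙ₋₁ xₙ₋₁) + κₙ xₙ` satisfies
`liminf xₙ/√ℓₙ > −∞ ⟺ limsup xₙ/√ℓₙ < ∞`. -/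
theorem stmt8 (ℓ σ1 σ0 σm1 κ : ℕ → ℝ) (x : ℕ → ℝ)
    (hℓ : ∀ n : ℕ, 1 ≤ n → 0 < ℓ n)
    (hσ0 : ∀ n : ℕ, 1 ≤ n → 0 < σ0 n)
    (hσ1 : ∀ n : ℕ, 1 ≤ n → 0 ≤ σ1 n)
    (hσm1 : ∀ n : ℕ, 1 ≤ n → 0 ≤ σm1 n)
    (hlimsupσ1 : Filter.limsup (fun n : ℕ => ((σ1 n : ℝ) : EReal)) Filter.atTop < ⊤)
    (hliminfσ0 : 0 < Filter.liminf (fun n : ℕ => ((σ0 n : ℝ) : EReal)) Filter.atTop)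
    (hlimsupσm1 : Filter.limsup (fun n : ℕ => ((σm1 n : ℝ) : EReal)) Filter.atTop < ⊤)
    (hliminfℓ :
      0 < Filter.liminf
        (fun n : ℕ => ((Real.sqrt (ℓ (n + 1) / ℓ n) : ℝ) : EReal)) Filter.atTop)
    (hlimsupℓ :
      Filter.limsup
        (fun n : ℕ => ((Real.sqrt (ℓ (n + 1) / ℓ n) : ℝ) : EReal)) Filter.atTop < ⊤)
    (hlimsupκ :
      Filter.limsup (fun n : ℕ => ((|κ n| / Real.sqrt (ℓ n) : ℝ) : EReal))
        Filter.atTop < ⊤)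
    (heq : ∀ n : ℕ, 1 ≤ n →
      ℓ n = x n * (σ1 n * x (n + 1) + σ0 n * x n + σm1 n * x (n - 1)) + κ n * x n) :
    (⊥ < Filter.liminf (fun n : ℕ => ((x n / Real.sqrt (ℓ n) : ℝ) : EReal)) Filter.atTop ↔
      Filter.limsup (fun n : ℕ => ((x n / Real.sqrt (ℓ n) : ℝ) : EReal)) Filter.atTop < ⊤) := by
  obtain ⟨A, hA0, hA⟩ := (limsup_coe_lt_top_iff _).1 hlimsupσ1
  obtain ⟨s, hs, hS⟩ := exists_pos_of_zero_lt_liminf_coe _ hliminfσ0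
  obtain ⟨B, hB0, hB⟩ := (limsup_coe_lt_top_iff _).1 hlimsupσm1
  obtain ⟨c, hc, hcℓ⟩ := exists_pos_of_zero_lt_liminf_coe _ hliminfℓ
  obtain ⟨R, hR, hRℓ⟩ := (limsup_coe_lt_top_iff _).1 hlimsupℓ
  obtain ⟨K, hK, hκ⟩ := (limsup_coe_lt_top_iff _).1 hlimsupκ
  rw [bot_lt_liminf_coe_iff, limsup_coe_lt_top_iff]
  constructor
  · rintro ⟨M, hM, hx⟩
    exact eventually_le_of_eventually_ge ℓ σ1 σ0 σm1 κ x hℓ hσ1 hσm1 hs hc hR hK hM hA0 hB0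
      hA hS hB hcℓ hRℓ hκ heq hx
  · rintro ⟨M, hM, hx⟩
    obtain ⟨C, hC0, hC⟩ := eventually_le_of_eventually_ge ℓ σ1 σ0 σm1 (fun n => -κ n)
      (fun n => -x n) hℓ hσ1 hσm1 hs hc hR hK hM hA0 hB0 hA hS hB hcℓ hRℓ
      (by simpa only [abs_neg] using hκ)
      (fun n hn => by rw [heq n hn]; ring)
      (by filter_upwards [hx] with n hn; rw [neg_div]; linarith)
    refine ⟨C, hC0, ?_⟩
    filter_upwards [hC] with n hn
    rw [neg_div] at hn
    linarith
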